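/- arXiv:2106.05761 — 4 statements merged into one kernel-verified Lean document; each statement's English description precedes it below -/
import Mathlib

section
/- Let U and R be finite sets with |R| = k ≥ 2, let C be a finite set of weighted constraints on U × R each of one of the six standard forms (SoD_U, BoD_U, SoD_E, BoD_E, Card_UB, Card_LB), and let τ ≥ 1 be an integer such that τ ≥ t_c for every Card_LB constraint in C. Then C is 3τk·(k choose 2)-wbounded. -/
open Finset

namespace APEP

variable {U R : Type*} [Fintype U] [Fintype R] [DecidableEq U] [DecidableEq R]

/-- The set of users authorized for resource `r` by `A`. -/
def ares (A : Finset (U × R)) (r : R) : Finset U := univ.filter (fun u => (u, r) ∈ A)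

/-- An authorization relation is complete if every resource has an authorized user. -/
def Complete (A : Finset (U × R)) : Prop := ∀ r : R, (ares A r).Nonempty

/-- A (total) constraint-weight function `wC` is `t`-wbounded: every complete `A` with
`|A| > t` contains a strictly smaller complete `A'` of no larger weight. -/
def WBounded (wC : Finset (U × R) → ℕ) (t : ℕ) : Prop :=
  ∀ A : Finset (U × R), Complete A → t < A.card →
    ∃ A' ⊆ A, Complete A' ∧ A'.card < A.card ∧ wC A' ≤ wC A

/-- `f : ℤ → ℕ` is monotonically increasing with `f z = 0` iff `z ≤ 0`. -/
def MonoIncZero (f : ℤ → ℕ) : Prop := Monotone f ∧ ∀ z : ℤ, f z = 0 ↔ z ≤ 0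

def IsSoDU (w : Finset (U × R) → ℕ) : Prop :=
  ∃ (r r' : R) (f : ℤ → ℕ), MonoIncZero f ∧
    ∀ A, w A = f (((ares A r) ∩ (ares A r')).card)

def IsBoDU (w : Finset (U × R) → ℕ) : Prop :=
  ∃ (r r' : R) (f : ℤ → ℕ), MonoIncZero f ∧
    ∀ A, w A = f (max ((ares A r \ ares A r').card) ((ares A r' \ ares A r).card))

def IsSoDE (w : Finset (U × R) → ℕ) : Prop :=
  ∃ (r r' : R) (ℓ : ℕ), 0 < ℓ ∧
    ∀ A, w A = if ares A r ≠ ares A r' then 0 else ℓ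

def IsBoDE (w : Finset (U × R) → ℕ) : Prop :=
  ∃ (r r' : R) (ℓ : ℕ), 0 < ℓ ∧
    ∀ A, w A = if ((ares A r) ∩ (ares A r')).Nonempty then 0 else ℓ

def IsCardUB (w : Finset (U × R) → ℕ) : Prop :=
  ∃ (r : R) (t : ℕ) (f : ℤ → ℕ), MonoIncZero f ∧
    ∀ A, w A = f (((ares A r).card : ℤ) - (t : ℤ))

/-- A Card_LB constraint with lower-bound parameter `t`. -/
def IsCardLB (w : Finset (U × R) → ℕ) (t : ℕ) : Prop :=
  ∃ (r : R) (f : ℤ → ℕ), MonoIncZero f ∧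
    ∀ A, w A = f ((t : ℤ) - ((ares A r).card : ℤ))

/-!
For two resources `r ≠ r'`, call each of the cells `A(r) ∩ A(r')`, `A(r) \ A(r')`, `A(r') \ A(r)`
light if it has at most `τ` users. The light cells of all pairs contain at most `3τ · (k choose 2)`
users, and each user accounts for at most `k` elements of `A`, so a larger `A` authorizes some user
`u` lying only in cells with more than `τ` users. Deleting `u` altogether keeps every `A(r)`
containing `u` at size at least `τ`, and empties no cell, so `A` stays complete and no Card_LB,
SoD_E or BoD_E weight increases; the weights of the other three forms never grow when a user is
deleted.
-/

section LightCells

variable {α β : Type*}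

/-- All of `Z` if `#Z ≤ τ`, and nothing otherwise: an element of `Z` outside this part can be
deleted with at least `τ` elements of `Z` remaining. -/
def lightPart (τ : ℕ) (Z : Finset α) : Finset α := if #Z ≤ τ then Z else ∅

theorem mem_lightPart {τ : ℕ} {Z : Finset α} {u : α} : u ∈ lightPart τ Z ↔ u ∈ Z ∧ #Z ≤ τ := by
  unfold lightPart
  split_ifs with h <;> simp [h]

theorem card_lightPart_le (τ : ℕ) (Z : Finset α) : #(lightPart τ Z) ≤ τ := by
  unfold lightPart
  split_ifs with h <;> simp [h]

theorem exists_mem_fst_notMem_of_card_mul_lt [Fintype β] {A : Finset (α × β)} {S : Finset α}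
    (h : #S * Fintype.card β < #A) : ∃ x ∈ A, x.1 ∉ S := by
  by_contra! hS
  have hsub : A ⊆ S ×ˢ univ := fun x hx => mem_product.2 ⟨hS x hx, mem_univ _⟩
  exact h.not_ge ((card_le_card hsub).trans_eq (card_product ..))

variable [DecidableEq α]

theorem min_card_le_card_erase {τ : ℕ} {Z : Finset α} {u : α} (hu : u ∈ Z → τ < #Z) :
    min τ #Z ≤ #(Z.erase u) := by
  by_cases h : u ∈ Z
  · have := hu h
    rw [card_erase_of_mem h]
    omega
  · simp [erase_eq_of_notMem h]

theorem erase_nonempty_of_lt_card {τ : ℕ} (hτ : 1 ≤ τ) {Z : Finset α} {u : α}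
    (hu : u ∈ Z → τ < #Z) (hZ : Z.Nonempty) : (Z.erase u).Nonempty :=
  card_pos.1 <| (lt_min hτ hZ.card_pos).trans_le (min_card_le_card_erase hu)

theorem erase_ne_erase_of_sdiff {τ : ℕ} (hτ : 1 ≤ τ) {X Y : Finset α} {u : α}
    (hXY : u ∈ X \ Y → τ < #(X \ Y)) (hYX : u ∈ Y \ X → τ < #(Y \ X)) (hne : X ≠ Y) :
    X.erase u ≠ Y.erase u := by
  suffices h : ∀ {V W : Finset α}, (u ∈ V \ W → τ < #(V \ W)) → V.erase u = W.erase u → V ⊆ W from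
    fun heq => hne ((h hXY heq).antisymm (h hYX heq.symm))
  intro V W hVW heq
  by_contra hsub
  have hdiff : ((V \ W).erase u).Nonempty :=
    erase_nonempty_of_lt_card hτ hVW (sdiff_nonempty.2 hsub)
  rw [erase_sdiff_distrib, heq, sdiff_self] at hdiff
  exact not_nonempty_empty hdiff

/-- The elements of the light cells among the three cells `X ∩ Y`, `X \ Y` and `Y \ X` of the Venn
diagram of `X` and `Y`. -/
def lightCells (τ : ℕ) (X Y : Finset α) : Finset α :=
  lightPart τ (X ∩ Y) ∪ (lightPart τ (X \ Y) ∪ lightPart τ (Y \ X))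

theorem lightCells_comm (τ : ℕ) (X Y : Finset α) : lightCells τ X Y = lightCells τ Y X := by
  unfold lightCells
  rw [inter_comm, union_comm (lightPart τ (X \ Y))]

theorem card_lightCells_le (τ : ℕ) (X Y : Finset α) : #(lightCells τ X Y) ≤ 3 * τ := by
  have h₁ := card_union_le (lightPart τ (X ∩ Y)) (lightPart τ (X \ Y) ∪ lightPart τ (Y \ X))
  have h₂ := card_union_le (lightPart τ (X \ Y)) (lightPart τ (Y \ X))
  have := card_lightPart_le τ (X ∩ Y)
  have := card_lightPart_le τ (X \ Y)
  have := card_lightPart_le τ (Y \ X)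
  unfold lightCells
  omega

theorem card_offDiag_biUnion_le_of_symm (s : Finset β) {S : β → β → Finset α}
    (hsymm : ∀ a b, S a b = S b a) {m : ℕ} (hm : ∀ a b, #(S a b) ≤ m) :
    #(s.offDiag.biUnion fun p => S p.1 p.2) ≤ (#s).choose 2 * m := by
  classical
  let T : Sym2 β → Finset α := Sym2.lift ⟨S, hsymm⟩
  calc #(s.offDiag.biUnion fun p => S p.1 p.2)
      = #((s.offDiag.image Sym2.mk.uncurry).biUnion T) := by rw [image_biUnion]; rfl
    _ ≤ #(s.offDiag.image Sym2.mk.uncurry) * m :=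
      card_biUnion_le_card_mul _ _ _ fun e _ => e.ind hm
    _ = (#s).choose 2 * m := by rw [Sym2.card_image_offDiag]

variable [Fintype β]

/-- The elements of the light cells of `X a` and `X b` for all pairs of indices `a ≠ b`; an
element outside lies only in cells with more than `τ` elements. -/
def criticalElements (τ : ℕ) (X : β → Finset α) : Finset α :=
  univ.offDiag.biUnion fun p => lightCells τ (X p.1) (X p.2)

theorem card_criticalElements_le (τ : ℕ) (X : β → Finset α) :
    #(criticalElements τ X) ≤ (Fintype.card β).choose 2 * (3 * τ) :=
  card_offDiag_biUnion_le_of_symm univ (S := fun a b => lightCells τ (X a) (X b))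
    (fun _ _ => lightCells_comm ..) (fun _ _ => card_lightCells_le ..)

variable {τ : ℕ} {X : β → Finset α} {u : α}

theorem notMem_lightCells_of_notMem_criticalElements (hu : u ∉ criticalElements τ X) {a b : β}
    (hab : a ≠ b) : u ∉ lightCells τ (X a) (X b) := fun h =>
  hu (mem_biUnion.2 ⟨(a, b), by simpa using hab, h⟩)

theorem lt_card_sdiff_of_notMem_criticalElements (hu : u ∉ criticalElements τ X) {a b : β}
    (h : u ∈ X a \ X b) : τ < #(X a \ X b) := by
  obtain rfl | hab := eq_or_ne a b
  · simp at h
  · by_contra! hle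
    exact notMem_lightCells_of_notMem_criticalElements hu hab <|
      mem_union_right _ (mem_union_left _ (mem_lightPart.2 ⟨h, hle⟩))

theorem lt_card_inter_of_notMem_criticalElements_of_ne (hu : u ∉ criticalElements τ X) {a b : β}
    (hab : a ≠ b) (h : u ∈ X a ∩ X b) : τ < #(X a ∩ X b) := by
  by_contra! hle
  exact notMem_lightCells_of_notMem_criticalElements hu hab <|
    mem_union_left _ (mem_lightPart.2 ⟨h, hle⟩)

theorem lt_card_of_notMem_criticalElements [Nontrivial β] (hu : u ∉ criticalElements τ X) {a : β}
    (h : u ∈ X a) : τ < #(X a) := by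
  obtain ⟨b, hba⟩ := exists_ne a
  by_cases hb : u ∈ X b
  · calc τ < #(X a ∩ X b) :=
          lt_card_inter_of_notMem_criticalElements_of_ne hu hba.symm (mem_inter.2 ⟨h, hb⟩)
      _ ≤ #(X a) := card_le_card inter_subset_left
  · calc τ < #(X a \ X b) :=
          lt_card_sdiff_of_notMem_criticalElements hu (mem_sdiff.2 ⟨h, hb⟩)
      _ ≤ #(X a) := card_le_card sdiff_subset

theorem lt_card_inter_of_notMem_criticalElements [Nontrivial β] (hu : u ∉ criticalElements τ X)
    {a b : β} (h : u ∈ X a ∩ X b) : τ < #(X a ∩ X b) := by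
  obtain rfl | hab := eq_or_ne a b
  · rw [inter_self] at h ⊢
    exact lt_card_of_notMem_criticalElements hu h
  · exact lt_card_inter_of_notMem_criticalElements_of_ne hu hab h

end LightCells

section EraseUser

variable {V S : Type*} [DecidableEq V]

/-- The authorization relation obtained from `A` by revoking all authorizations of the user `u`. -/
def eraseUser (A : Finset (V × S)) (u : V) : Finset (V × S) := A.filter (·.1 ≠ u)

theorem eraseUser_subset (A : Finset (V × S)) (u : V) : eraseUser A u ⊆ A := filter_subset _ _

theorem card_eraseUser_lt {A : Finset (V × S)} {u : V} {r : S} (h : (u, r) ∈ A) :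
    #(eraseUser A u) < #A :=
  card_lt_card (filter_ssubset.2 ⟨(u, r), h, by simp⟩)

variable [Fintype V] [DecidableEq S]

theorem ares_mono (r : S) : Monotone fun A : Finset (V × S) => ares A r :=
  fun _ _ h => monotone_filter_right _ fun _ _ hx => h hx

theorem ares_eraseUser (A : Finset (V × S)) (u : V) (r : S) :
    ares (eraseUser A u) r = (ares A r).erase u := by
  ext x
  simp [ares, eraseUser, and_comm]

variable {w : Finset (V × S) → ℕ}

theorem IsSoDU.monotone (hw : IsSoDU w) : Monotone w := by
  obtain ⟨r, r', f, ⟨hf, -⟩, hw⟩ := hw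
  intro A B hAB
  rw [hw, hw]
  exact hf (mod_cast card_le_card (inter_subset_inter (ares_mono r hAB) (ares_mono r' hAB)))

theorem IsCardUB.monotone (hw : IsCardUB w) : Monotone w := by
  obtain ⟨r, t, f, ⟨hf, -⟩, hw⟩ := hw
  intro A B hAB
  rw [hw, hw]
  exact hf (sub_le_sub_right (mod_cast card_le_card (ares_mono r hAB)) _)

theorem IsBoDU.eraseUser_le (hw : IsBoDU w) (A : Finset (V × S)) (u : V) :
    w (eraseUser A u) ≤ w A := by
  obtain ⟨r, r', f, ⟨hf, -⟩, hw⟩ := hw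
  simp only [hw, ares_eraseUser, ← erase_sdiff_distrib]
  exact hf (mod_cast max_le_max (card_erase_le ..) (card_erase_le ..))

variable [Fintype S] {A : Finset (V × S)} {u : V} {τ : ℕ}

theorem IsSoDE.eraseUser_le (hw : IsSoDE w) (hτ : 1 ≤ τ) (hu : u ∉ criticalElements τ (ares A)) :
    w (eraseUser A u) ≤ w A := by
  obtain ⟨r, r', ℓ, -, hw⟩ := hw
  simp only [hw, ares_eraseUser]
  by_cases h : ares A r = ares A r'
  · simp [h]
  · have hne : (ares A r).erase u ≠ (ares A r').erase u :=
      erase_ne_erase_of_sdiff hτ (lt_card_sdiff_of_notMem_criticalElements hu)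
        (lt_card_sdiff_of_notMem_criticalElements hu) h
    simp [hne]

variable [Nontrivial S]

theorem IsBoDE.eraseUser_le (hw : IsBoDE w) (hτ : 1 ≤ τ) (hu : u ∉ criticalElements τ (ares A)) :
    w (eraseUser A u) ≤ w A := by
  obtain ⟨r, r', ℓ, -, hw⟩ := hw
  simp only [hw, ares_eraseUser, erase_inter, inter_erase, erase_idem]
  by_cases h : (ares A r ∩ ares A r').Nonempty
  · have hinter : ((ares A r ∩ ares A r').erase u).Nonempty :=
      erase_nonempty_of_lt_card hτ (lt_card_inter_of_notMem_criticalElements hu) h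
    simp [hinter]
  · simp [not_nonempty_iff_eq_empty.1 h]

theorem IsCardLB.eraseUser_le {t : ℕ} (hw : IsCardLB w t) (ht : t ≤ τ)
    (hu : u ∉ criticalElements τ (ares A)) : w (eraseUser A u) ≤ w A := by
  obtain ⟨r, f, ⟨hf, hf₀⟩, hw⟩ := hw
  have hmin : min τ #(ares A r) ≤ #((ares A r).erase u) :=
    min_card_le_card_erase (lt_card_of_notMem_criticalElements hu)
  rw [hw, hw, ares_eraseUser]
  obtain h | h := min_le_iff.1 hmin
  · rw [(hf₀ _).2 (by omega)]
    exact Nat.zero_le _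
  · exact hf (by omega)

theorem Complete.eraseUser (hA : Complete A) (hτ : 1 ≤ τ) (hu : u ∉ criticalElements τ (ares A)) :
    Complete (eraseUser A u) := fun r => by
  rw [ares_eraseUser]
  exact erase_nonempty_of_lt_card hτ (lt_card_of_notMem_criticalElements hu) (hA r)

end EraseUser

theorem exists_mem_fst_notMem_criticalElements {A : Finset (U × R)} {τ : ℕ}
    (hA : 3 * τ * Fintype.card R * (Fintype.card R).choose 2 < #A) :
    ∃ x ∈ A, x.1 ∉ criticalElements τ (ares A) := by
  apply exists_mem_fst_notMem_of_card_mul_lt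
  calc #(criticalElements τ (ares A)) * Fintype.card R
      ≤ (Fintype.card R).choose 2 * (3 * τ) * Fintype.card R :=
        Nat.mul_le_mul_right _ (card_criticalElements_le ..)
    _ = 3 * τ * Fintype.card R * (Fintype.card R).choose 2 := by ring
    _ < #A := hA

theorem standard_constraints_wbounded {ι : Type*} [Fintype ι]
    (w : ι → Finset (U × R) → ℕ) (k τ : ℕ)
    (hk : k = Fintype.card R) (hk2 : 2 ≤ k) (hτ : 1 ≤ τ)
    (hforms : ∀ i, IsSoDU (w i) ∨ IsBoDU (w i) ∨ IsSoDE (w i) ∨ IsBoDE (w i) ∨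
      IsCardUB (w i) ∨ ∃ t ≤ τ, IsCardLB (w i) t) :
    WBounded (fun A => ∑ i, w i A) (3 * τ * k * k.choose 2) := by
  subst hk
  have : Nontrivial R := Fintype.one_lt_card_iff_nontrivial.1 hk2
  intro A hA hcard
  obtain ⟨⟨u, r⟩, hur, hu⟩ := exists_mem_fst_notMem_criticalElements hcard
  refine ⟨eraseUser A u, eraseUser_subset A u, hA.eraseUser hτ hu, card_eraseUser_lt hur,
    sum_le_sum fun i _ => ?_⟩
  rcases hforms i with h | h | h | h | h | ⟨t, ht, h⟩
  · exact h.monotone (eraseUser_subset A u)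
  · exact h.eraseUser_le A u
  · exact h.eraseUser_le hτ hu
  · exact h.eraseUser_le hτ hu
  · exact h.monotone (eraseUser_subset A u)
  · exact h.eraseUser_le ht hu

end APEP
end

section
/- Let U and R be finite sets, let w_c be a user-independent weighted constraint on U × R, and let A₁, A₂ ⊆ U × R be authorization relations such that usr_{A₁}(T) = usr_{A₂}(T) for every T ⊆ R. Then w_c(A₁) = w_c(A₂). -/
/-!
An authorization relation is determined by the map `u ↦ A(u)`, and a permutation of the users acts
on it by precomposing this map. Equal user profiles say that the maps of `A₁` and `A₂` have fibers
of the same sizes; gluing bijections between the fibers gives a permutation carrying `A₁` to `A₂`.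
-/

open Finset

namespace APEP

variable {U R : Type*} [Fintype U] [Fintype R] [DecidableEq U] [DecidableEq R]

/-- The set of resources for which user `u` is authorized by `A`. -/
def ausr (A : Finset (U × R)) (u : U) : Finset R := univ.filter (fun r => (u, r) ∈ A)

/-- The action of a permutation of users on an authorization relation:
`σ(A) = {(σ(u), r) : (u,r) ∈ A}`. -/
def permAuth (σ : Equiv.Perm U) (A : Finset (U × R)) : Finset (U × R) :=
  A.image (fun p => (σ p.1, p.2))

/-- A weighted constraint is user-independent if its weight is invariant under
permutations of the users. -/
def UserIndependent (w : Finset (U × R) → ℕ) : Prop :=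
  ∀ (σ : Equiv.Perm U) (A : Finset (U × R)), w (permAuth σ A) = w A

/-- The user profile of `A`: the number of users authorized by `A` for exactly
the set `T` of resources. -/
def usrProfile (A : Finset (U × R)) (T : Finset R) : ℕ :=
  (univ.filter (fun u => ausr A u = T)).card

theorem exists_equiv_comp_eq_of_card_fiber_eq {α β γ : Type*} [Fintype α] [Fintype β]
    [DecidableEq γ] {f : α → γ} {g : β → γ} (h : ∀ c, #{a | f a = c} = #{b | g b = c}) :
    ∃ e : α ≃ β, g ∘ e = f := by
  have fiberEquiv (c : γ) : Nonempty ({a // f a = c} ≃ {b // g b = c}) := by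
    rw [← Fintype.card_eq, Fintype.card_subtype, Fintype.card_subtype, h]
  exact ⟨Equiv.ofFiberEquiv fun c => (fiberEquiv c).some, funext (Equiv.ofFiberEquiv_map _)⟩

omit [Fintype U] in
@[simp]
theorem mem_ausr {A : Finset (U × R)} {u : U} {r : R} : r ∈ ausr A u ↔ (u, r) ∈ A := by
  simp [ausr]

omit [Fintype U] in
theorem ausr_injective : Function.Injective (ausr : Finset (U × R) → U → Finset R) := by
  intro A₁ A₂ h
  ext ⟨u, r⟩
  rw [← mem_ausr, h, mem_ausr]

omit [Fintype U] [Fintype R] in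
@[simp]
theorem mem_permAuth {σ : Equiv.Perm U} {A : Finset (U × R)} {u : U} {r : R} :
    (u, r) ∈ permAuth σ A ↔ (σ.symm u, r) ∈ A := by
  simp [permAuth, ← Equiv.eq_symm_apply]

omit [Fintype U] in
theorem ausr_permAuth (σ : Equiv.Perm U) (A : Finset (U × R)) :
    ausr (permAuth σ A) = ausr A ∘ σ.symm := by
  ext u r
  simp only [Function.comp_apply, mem_ausr, mem_permAuth]

theorem exists_permAuth_eq_of_usrProfile_eq {A₁ A₂ : Finset (U × R)}
    (h : ∀ T : Finset R, usrProfile A₁ T = usrProfile A₂ T) :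
    ∃ σ : Equiv.Perm U, permAuth σ A₁ = A₂ := by
  obtain ⟨σ, hσ⟩ := exists_equiv_comp_eq_of_card_fiber_eq h
  refine ⟨σ, ausr_injective ?_⟩
  rw [ausr_permAuth, Equiv.comp_symm_eq, hσ]

theorem weight_eq_of_usrProfile_eq_general {α : Type*} (w : Finset (U × R) → α)
    (hw : ∀ (σ : Equiv.Perm U) (A : Finset (U × R)), w (permAuth σ A) = w A)
    (A₁ A₂ : Finset (U × R)) (h : ∀ T : Finset R, usrProfile A₁ T = usrProfile A₂ T) :
    w A₁ = w A₂ := by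
  obtain ⟨σ, rfl⟩ := exists_permAuth_eq_of_usrProfile_eq h
  exact (hw σ A₁).symm

theorem weight_eq_of_usrProfile_eq (w : Finset (U × R) → ℕ)
    (hw : UserIndependent w) (A₁ A₂ : Finset (U × R))
    (h : ∀ T : Finset R, usrProfile A₁ T = usrProfile A₂ T) :
    w A₁ = w A₂ :=
  weight_eq_of_usrProfile_eq_general w hw A₁ A₂ h

end APEP
end

section
/- Let U and R be finite sets, let ω be a weighted user authorization function, and let C be a finite set of weighted constraints on U × R each of the form w_c(A) = f_c(|A(r_c) ∩ A(r'_c)|) for some r_c, r'_c ∈ R and a monotonically increasing function f_c : ℤ → ℕ with f_c(z) = 0 iff z ≤ 0 (SoD_U constraints). Let A* be a complete authorization relation with w(A*) ≤ w(B) for every complete authorization relation B, and let A' ⊆ A* be any authorization relation with |A'(r)| = 1 for every r ∈ R. Then A' is complete and w(A') ≤ w(B) for every complete authorization relation B. -/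
open Finset

namespace APEP

variable {U R : Type*} [Fintype U] [Fintype R] [DecidableEq U] [DecidableEq R]

section Monotonicity

variable {A B : Finset (U × R)} {M ι : Type*} [AddCommMonoid M] [Preorder M] [IsOrderedAddMonoid M]
  [Fintype ι]

omit [Fintype R] in
theorem ares_subset_ares (h : A ⊆ B) (r : R) : ares A r ⊆ ares B r :=
  monotone_filter_right _ fun _ _ hA => h hA

omit [Fintype U] in
theorem ausr_subset_ausr (h : A ⊆ B) (u : U) : ausr A u ⊆ ausr B u :=
  monotone_filter_right _ fun _ _ hA => h hA

/-- The weight `w(A) = Ω(A) + w_C(A)` of an authorization relation, for the user authorization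
function `ω` and constraint weights `w` indexed by a finite type. The values lie in any
commutative additive monoid `M`, which is `ℕ` in the paper. -/
def totalWeight (ω : U → Finset R → M) (w : ι → Finset (U × R) → M) (A : Finset (U × R)) : M :=
  ∑ u, ω u (ausr A u) + ∑ i, w i A

theorem monotone_totalWeight {ω : U → Finset R → M} {w : ι → Finset (U × R) → M}
    (hω : ∀ u, Monotone (ω u)) (hw : ∀ i, Monotone (w i)) : Monotone (totalWeight ω w) :=
  fun _ _ h => add_le_add (sum_le_sum fun u _ => hω u (ausr_subset_ausr h u))
    (sum_le_sum fun i _ => hw i h)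

/-- The weight `f(|A(r) ∩ A(r')|)` that an SoD_U constraint on the resources `r` and `r'` gives to
`A`. -/
def sodUWeight {N : Type*} (f : ℤ → N) (r r' : R) (A : Finset (U × R)) : N :=
  f (ares A r ∩ ares A r').card

omit [Fintype R] in
theorem monotone_sodUWeight {N : Type*} [Preorder N] {f : ℤ → N} (hf : Monotone f) (r r' : R) :
    Monotone (sodUWeight f r r' : Finset (U × R) → N) :=
  fun _ _ h => hf <| Int.ofNat_le.2 <| card_le_card <|
    inter_subset_inter (ares_subset_ares h r) (ares_subset_ares h r')

theorem sodU_subrelation_optimal_general {ω : U → Finset R → M} (hω : ∀ u, Monotone (ω u))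
    {w : ι → Finset (U × R) → M} (hw : ∀ i, Monotone (w i)) {Astar A' : Finset (U × R)}
    (hopt : ∀ B, Complete B → totalWeight ω w Astar ≤ totalWeight ω w B) (hsub : A' ⊆ Astar) :
    ∀ B, Complete B → totalWeight ω w A' ≤ totalWeight ω w B :=
  fun B hB => (monotone_totalWeight hω hw hsub).trans (hopt B hB)

end Monotonicity

theorem sodU_subrelation_optimal {ι : Type*} [Fintype ι]
    (ω : U → Finset R → ℕ)
    (hω : ∀ (u : U) (T' T : Finset R), T' ⊆ T → ω u T' ≤ ω u T)
    (rc rc' : ι → R) (f : ι → ℤ → ℕ) (hf : ∀ i, MonoIncZero (f i))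
    -- the total weight of an authorization relation, with SoD_U constraints only
    (wt : Finset (U × R) → ℕ)
    (hwt : ∀ A, wt A = (∑ u, ω u (ausr A u)) +
      ∑ i, f i (((ares A (rc i)) ∩ (ares A (rc' i))).card))
    (Astar : Finset (U × R)) (hAstar : Complete Astar)
    (hopt : ∀ B : Finset (U × R), Complete B → wt Astar ≤ wt B)
    (A' : Finset (U × R)) (hsub : A' ⊆ Astar)
    (hone : ∀ r : R, (ares A' r).card = 1) :
    Complete A' ∧ ∀ B : Finset (U × R), Complete B → wt A' ≤ wt B := by
  obtain rfl : wt = totalWeight ω fun i => sodUWeight (f i) (rc i) (rc' i) := funext hwt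
  exact ⟨fun r => card_pos.1 (hone r ▸ one_pos), sodU_subrelation_optimal_general hω
    (fun i => monotone_sodUWeight (hf i).1 (rc i) (rc' i)) hopt hsub⟩

end APEP
end

section
/- Let U and R be finite sets, let ω be a weighted user authorization function, and let C be a finite set of weighted constraints on U × R, each of which is either of the form w_c(A) = f_c(|A(r_c) ∩ A(r'_c)|) (SoD_U) or of the form w_c(A) = f_c(max(|A(r_c) \ A(r'_c)|, |A(r'_c) \ A(r_c)|)) (BoD_U), where r_c, r'_c ∈ R and f_c : ℤ → ℕ is monotonically increasing with f_c(z) = 0 iff z ≤ 0. Let A* be a complete authorization relation with w(A*) ≤ w(B) for every complete authorization relation B. Then there exists an authorization relation A' ⊆ A* with |A'(r)| = 1 for every r ∈ R such that w(A') ≤ w(B) for every complete authorization relation B. -/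
open Finset

namespace APEP

variable {U R : Type*} [Fintype U] [Fintype R] [DecidableEq U] [DecidableEq R]

/-! Replace each authorized set `A(r)` by a single user chosen from it, the choice depending only on
the set `A(r)` and not on `r`. The users' resource sets and all intersections shrink, so the user
weights and the SoD_U weights do not increase. If `A(r_c) = A(r'_c)`, the chosen users agree and the
BoD_U constraint is satisfied; otherwise it was already violated by at least `1`, which is the most
that two singletons can violate it. -/

omit [Fintype R] in
lemma mem_ares {A : Finset (U × R)} {u : U} {r : R} : u ∈ ares A r ↔ (u, r) ∈ A := by
  simp [ares]

omit [Fintype R] in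
lemma ares_mono_s12 {A B : Finset (U × R)} (h : A ⊆ B) (r : R) : ares A r ⊆ ares B r :=
  monotone_filter_right _ fun _ _ hu => h hu

omit [Fintype U] in
lemma ausr_mono {A B : Finset (U × R)} (h : A ⊆ B) (u : U) : ausr A u ⊆ ausr B u :=
  monotone_filter_right _ fun _ _ hr => h hr

/-- The authorization relation `{(g r, r) : r ∈ R}` in which `g r` is the only user authorized for
`r`. -/
def assignment (g : R → U) : Finset (U × R) := univ.image fun r => (g r, r)

lemma ares_assignment (g : R → U) (r : R) : ares (assignment g) r = {g r} := by
  ext u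
  simp [mem_ares, assignment, eq_comm]

lemma assignment_subset_iff {g : R → U} {A : Finset (U × R)} :
    assignment g ⊆ A ↔ ∀ r, g r ∈ ares A r := by
  simp [assignment, image_subset_iff, mem_ares]

lemma exists_mem_factorsThrough {ι α : Type*} (s : ι → Finset α) (hs : ∀ i, (s i).Nonempty) :
    ∃ g : ι → α, (∀ i, g i ∈ s i) ∧ g.FactorsThrough s :=
  ⟨fun i => (hs i).choose, fun i => (hs i).choose_spec, fun i j h => by simp only [h]⟩

section BodDefect

variable {α : Type*} [DecidableEq α]

/-- The extent `max (|S \ T|, |T \ S|)` to which user sets `S` and `T` violate a BoD_U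
constraint. -/
def bodDefect (S T : Finset α) : ℕ := max (S \ T).card (T \ S).card

lemma bodDefect_eq_zero_iff {S T : Finset α} : bodDefect S T = 0 ↔ S = T := by
  rw [bodDefect, Nat.max_eq_zero_iff, card_eq_zero, card_eq_zero, sdiff_eq_empty_iff_subset,
    sdiff_eq_empty_iff_subset, Subset.antisymm_iff]

lemma bodDefect_singleton_le_one (a b : α) : bodDefect {a} {b} ≤ 1 :=
  max_le (card_le_card sdiff_subset) (card_le_card sdiff_subset)

lemma bodDefect_singleton_le {S T : Finset α} {a b : α} (hab : S = T → a = b) :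
    bodDefect {a} {b} ≤ bodDefect S T := by
  by_cases hST : S = T
  · rw [hab hST, bodDefect_eq_zero_iff.2 rfl]
    exact Nat.zero_le _
  · exact (bodDefect_singleton_le_one a b).trans
      (Nat.one_le_iff_ne_zero.2 (mt bodDefect_eq_zero_iff.1 hST))

end BodDefect

section Weight

variable {ιs ιb M : Type*} [Fintype ιs] [Fintype ιb] [AddCommMonoid M]

/-- The weight `w(A) = Ω(A) + w_C(A)` of an authorization relation, with values in `M`, where the
SoD_U constraints are indexed by `ιs` and the BoD_U constraints by `ιb`. -/
def weight (ω : U → Finset R → M) (rs rs' : ιs → R) (fs : ιs → ℤ → M) (rb rb' : ιb → R)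
    (fb : ιb → ℤ → M) (A : Finset (U × R)) : M :=
  (∑ u, ω u (ausr A u)) + ((∑ i, fs i (ares A (rs i) ∩ ares A (rs' i)).card) +
    ∑ i, fb i (bodDefect (ares A (rb i)) (ares A (rb' i))))

variable [Preorder M] [IsOrderedAddMonoid M] {ω : U → Finset R → M} {fs : ιs → ℤ → M}
  {fb : ιb → ℤ → M} {A : Finset (U × R)}

lemma weight_assignment_le (hω : ∀ u, Monotone (ω u)) (rs rs' : ιs → R)
    (hfs : ∀ i, Monotone (fs i)) (rb rb' : ιb → R) (hfb : ∀ i, Monotone (fb i)) {g : R → U}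
    (hmem : ∀ r, g r ∈ ares A r) (hfac : g.FactorsThrough (ares A)) :
    weight ω rs rs' fs rb rb' fb (assignment g) ≤ weight ω rs rs' fs rb rb' fb A := by
  have hsub : assignment g ⊆ A := assignment_subset_iff.2 hmem
  refine add_le_add (sum_le_sum fun u _ => hω u (ausr_mono hsub u))
    (add_le_add (sum_le_sum fun i _ => hfs i ?_) (sum_le_sum fun i _ => hfb i ?_))
  · exact Int.ofNat_le.2 <| card_le_card <|
      inter_subset_inter (ares_mono_s12 hsub (rs i)) (ares_mono_s12 hsub (rs' i))
  · rw [ares_assignment, ares_assignment]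
    exact Int.ofNat_le.2 (bodDefect_singleton_le fun h => hfac h)

theorem bodU_sodU_exists_singleton_optimal_general (hω : ∀ u, Monotone (ω u))
    (rs rs' : ιs → R) (hfs : ∀ i, Monotone (fs i)) (rb rb' : ιb → R)
    (hfb : ∀ i, Monotone (fb i)) (hA : Complete A) :
    ∃ A' ⊆ A, (∀ r : R, (ares A' r).card = 1) ∧
      weight ω rs rs' fs rb rb' fb A' ≤ weight ω rs rs' fs rb rb' fb A := by
  obtain ⟨g, hmem, hfac⟩ := exists_mem_factorsThrough (ares A) hA
  exact ⟨assignment g, assignment_subset_iff.2 hmem,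
    fun r => by rw [ares_assignment, card_singleton],
    weight_assignment_le hω rs rs' hfs rb rb' hfb hmem hfac⟩

end Weight

theorem bodU_sodU_exists_singleton_optimal
    {ιs ιb : Type*} [Fintype ιs] [Fintype ιb]
    (ω : U → Finset R → ℕ)
    (hω : ∀ (u : U) (T' T : Finset R), T' ⊆ T → ω u T' ≤ ω u T)
    -- SoD_U constraints, indexed by ιs
    (rs rs' : ιs → R) (fs : ιs → ℤ → ℕ) (hfs : ∀ i, MonoIncZero (fs i))
    -- BoD_U constraints, indexed by ιb
    (rb rb' : ιb → R) (fb : ιb → ℤ → ℕ) (hfb : ∀ i, MonoIncZero (fb i))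
    -- the total weight of an authorization relation
    (wt : Finset (U × R) → ℕ)
    (hwt : ∀ A, wt A = (∑ u, ω u (ausr A u)) +
      ((∑ i, fs i (((ares A (rs i)) ∩ (ares A (rs' i))).card)) +
        ∑ i, fb i (max ((ares A (rb i) \ ares A (rb' i)).card)
          ((ares A (rb' i) \ ares A (rb i)).card))))
    (Astar : Finset (U × R)) (hAstar : Complete Astar)
    (hopt : ∀ B : Finset (U × R), Complete B → wt Astar ≤ wt B) :
    ∃ A' ⊆ Astar, (∀ r : R, (ares A' r).card = 1) ∧
      ∀ B : Finset (U × R), Complete B → wt A' ≤ wt B := by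
  obtain rfl : wt = weight ω rs rs' fs rb rb' fb :=
    funext fun A => by simp only [hwt, weight, bodDefect, Nat.cast_max]
  obtain ⟨A', hsub, hcard, hle⟩ := bodU_sodU_exists_singleton_optimal_general hω rs rs'
    (fun i => (hfs i).1) rb rb' (fun i => (hfb i).1) hAstar
  exact ⟨A', hsub, hcard, fun B hB => hle.trans (hopt B hB)⟩

end APEP
end
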